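/- (Menas) If κ is a measurable cardinal and the set of strongly compact cardinals below κ is unbounded in κ, then κ is strongly compact. -/

import Mathlib

/-!
Let `D` be a `κ`-complete nonprincipal ultrafilter on `κ`. Since `2 ^ ν < κ` for every `ν < κ`, the
cardinal `κ` is a limit, so each `ξ < κ` has a `λ`-strongly compact `μ` with `|ξ| < μ < κ`, and with
it a `μ`-complete fine ultrafilter `V ξ` on `P_μ(λ) ⊆ P_κ(λ)`. The witness for `κ` is the `D`-limit
of the `V ξ`, whose large sets are those that are `V ξ`-large for `D`-almost all `ξ`. It is
`κ`-complete because any `ν < κ` satisfies `ν ≤ |ξ|` for `D`-almost all `ξ`, and for these `ξ` the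
ultrafilter `V ξ` is closed under intersections of `ν` sets.
-/

open Cardinal Set

/-- `P_κ(λ)`: the collection of all sets of ordinals below `λ` of cardinality less than `κ`. -/
def smallSubsets (κ lam : Cardinal.{0}) : Set (Set Ordinal.{0}) :=
  {s | (∀ α ∈ s, α < lam.ord) ∧ #s < Cardinal.lift.{1} κ}

/-- `U` is an ultrafilter on the set `A`. -/
structure IsUltrafilterOn {α : Type*} (A : Set α) (U : Set (Set α)) : Prop where
  sets_subset : ∀ Y ∈ U, Y ⊆ A
  base_mem : A ∈ U
  empty_not_mem : ∅ ∉ U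
  superset_mem : ∀ Y ∈ U, ∀ Z ⊆ A, Y ⊆ Z → Z ∈ U
  inter_mem : ∀ Y ∈ U, ∀ Z ∈ U, Y ∩ Z ∈ U
  mem_or_compl_mem : ∀ Y ⊆ A, Y ∈ U ∨ A \ Y ∈ U

/-- `U` is `κ`-complete: the intersection of fewer than `κ` members of `U` is in `U`. -/
def IsKappaComplete {α : Type 1} (κ : Cardinal.{0}) (A : Set α) (U : Set (Set α)) : Prop :=
  ∀ F : Set (Set α), F ⊆ U → #F < Cardinal.lift.{1} κ → A ∩ ⋂₀ F ∈ U

/-- `U` is a fine (ultra)filter on `P_κ(λ)`. -/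
def IsFine (κ lam : Cardinal.{0}) (U : Set (Set (Set Ordinal.{0}))) : Prop :=
  ∀ α < lam.ord, {s ∈ smallSubsets κ lam | α ∈ s} ∈ U

/-- `κ` is `λ`-strongly compact: there is a `κ`-complete fine ultrafilter on `P_κ(λ)`. -/
def IsStronglyCompactIn (κ lam : Cardinal.{0}) : Prop :=
  ∃ U : Set (Set (Set Ordinal.{0})), IsUltrafilterOn (smallSubsets κ lam) U ∧
    IsKappaComplete κ (smallSubsets κ lam) U ∧ IsFine κ lam U

/-- `κ` is strongly compact: `λ`-strongly compact for every cardinal `λ ≥ κ`. -/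
def IsStronglyCompactCard (κ : Cardinal.{0}) : Prop :=
  ∀ lam, κ ≤ lam → IsStronglyCompactIn κ lam

/-- `κ` is measurable: uncountable, with a `κ`-complete nonprincipal ultrafilter on `κ`
(identified with the set of ordinals below `κ`). -/
def IsMeasurableCard (κ : Cardinal.{0}) : Prop :=
  ℵ₀ < κ ∧ ∃ U : Set (Set Ordinal.{0}), IsUltrafilterOn (Set.Iio κ.ord) U ∧
    IsKappaComplete κ (Set.Iio κ.ord) U ∧ ∀ γ : Ordinal.{0}, {γ} ∉ U

section CardinalInterFilter

open Filter

universe u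

variable {α : Type u} {c : Cardinal.{u}}

theorem compl_mem_of_mk_lt {l : Filter α} [CardinalInterFilter l c] {s : Set α} (hs : #s < c)
    (hl : ∀ x ∈ s, {x}ᶜ ∈ l) : sᶜ ∈ l := by
  rw [← biUnion_of_singleton s, compl_iUnion₂]
  exact (cardinal_bInter_mem hs).2 hl

theorem cardinalInterFilter_bind {β : Type u} {l : Filter α} [CardinalInterFilter l c]
    {m : α → Filter β} (hm : ∀ a < c, ∀ᶠ x in l, CardinalInterFilter (m x) (Order.succ a)) :
    CardinalInterFilter (l.bind m) c where
  cardinal_sInter_mem S hSc hS := by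
    rw [mem_bind']
    filter_upwards [(eventually_cardinal_ball hSc).2 hS, hm _ hSc] with x hSx hmx
    exact (cardinal_sInter_mem (Order.lt_succ _)).2 hSx

variable {D : Ultrafilter α} [CardinalInterFilter (D : Filter α) c]

theorem exists_eventually_eq_of_mk_lt {ι : Type u} (hι : #ι < c) (f : α → Set ι) :
    ∃ T, ∀ᶠ x in D, f x = T := by
  refine ⟨{i | ∀ᶠ x in D, i ∈ f x}, ?_⟩
  simp only [Set.ext_iff]
  refine (eventually_cardinal_forall hι).2 fun i => ?_
  by_cases hi : ∀ᶠ x in D, i ∈ f x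
  · filter_upwards [hi] with x hx using iff_of_true hx hi
  · filter_upwards [Ultrafilter.eventually_not.2 hi] with x hx using iff_of_false hx hi

theorem two_power_lt_mk_of_mem (hD : ∀ x, {x} ∉ D) {s : Set α} (hs : s ∈ D) {a : Cardinal.{u}}
    (ha : a < c) : 2 ^ a < #s := by
  induction a using Cardinal.inductionOn with | _ ι
  by_contra! hle
  rw [← mk_set] at hle
  obtain ⟨f⟩ := hle
  let g : α → Set ι := Function.extend Subtype.val f fun _ => ∅
  have hg : InjOn g s := by
    intro x hx y hy hxy
    have hgf (z : s) : g z = f z := Subtype.val_injective.extend_apply _ _ z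
    exact congrArg Subtype.val (f.injective ((hgf ⟨x, hx⟩).symm.trans (hxy.trans (hgf ⟨y, hy⟩))))
  obtain ⟨T, hT⟩ := exists_eventually_eq_of_mk_lt (D := D) ha g
  obtain ⟨x, hxs, hxT⟩ := D.nonempty_of_mem (Filter.inter_mem hs hT)
  refine hD x ?_
  filter_upwards [hs, hT] with y hys hyT using hg hys hxs (hyT.trans hxT.symm)

end CardinalInterFilter

section ToUltrafilter

/-- The ultrafilter on the whole type generated by an ultrafilter `U` on the set `A`, namely the
sets whose trace on `A` is in `U`. It makes Mathlib's filter API available for `U`. -/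
def IsUltrafilterOn.toUltrafilter {α : Type*} {A : Set α} {U : Set (Set α)}
    (hU : IsUltrafilterOn A U) : Ultrafilter α :=
  .ofComplNotMemIff
    { sets := {Y | Y ∩ A ∈ U}
      univ_sets := by simpa using hU.base_mem
      sets_of_superset := fun hY hYZ =>
        hU.superset_mem _ hY _ inter_subset_right (inter_subset_inter_left A hYZ)
      inter_sets := fun {Y Z} hY hZ => by
        rw [mem_ofPred_eq, inter_inter_distrib_right]
        exact hU.inter_mem _ hY _ hZ }
    fun Y => by
      change Yᶜ ∩ A ∉ U ↔ Y ∩ A ∈ U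
      have hcompl : A \ (Y ∩ A) = Yᶜ ∩ A := by
        rw [sdiff_inter_self_eq_sdiff, Set.sdiff_eq, inter_comm]
      refine ⟨fun h => (hU.mem_or_compl_mem _ inter_subset_right).resolve_right (hcompl ▸ h),
        fun h hc => hU.empty_not_mem ?_⟩
      simpa [← inter_inter_distrib_right] using hU.inter_mem _ h _ hc

theorem IsUltrafilterOn.mem_toUltrafilter {α : Type*} {A Y : Set α} {U : Set (Set α)}
    (hU : IsUltrafilterOn A U) : Y ∈ hU.toUltrafilter ↔ Y ∩ A ∈ U :=
  Iff.rfl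

theorem IsUltrafilterOn.base_mem_toUltrafilter {α : Type*} {A : Set α} {U : Set (Set α)}
    (hU : IsUltrafilterOn A U) : A ∈ hU.toUltrafilter := by
  simpa only [hU.mem_toUltrafilter, inter_self] using hU.base_mem

theorem isUltrafilterOn_of_mem {α : Type*} {A : Set α} {D : Ultrafilter α} (hA : A ∈ D) :
    IsUltrafilterOn A {Y | Y ⊆ A ∧ Y ∈ D} where
  sets_subset _ hY := hY.1
  base_mem := ⟨subset_rfl, hA⟩
  empty_not_mem h := D.empty_notMem h.2
  superset_mem _ hY _ hZ hYZ := ⟨hZ, Filter.mem_of_superset hY.2 hYZ⟩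
  inter_mem _ hY _ hZ := ⟨inter_subset_left.trans hY.1, Filter.inter_mem hY.2 hZ.2⟩
  mem_or_compl_mem Y hY := (D.mem_or_compl_mem Y).imp (fun h => ⟨hY, h⟩)
    fun h => ⟨sdiff_subset, Filter.inter_mem hA h⟩

variable {α : Type 1} {A : Set α} {κ : Cardinal.{0}}

theorem IsKappaComplete.cardinalInterFilter {U : Set (Set α)} (hc : IsKappaComplete κ A U)
    (hU : IsUltrafilterOn A U) :
    CardinalInterFilter (hU.toUltrafilter : Filter α) (lift.{1} κ) where
  cardinal_sInter_mem S hSκ hS := by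
    have hmem := hc ((· ∩ A) '' S) (image_subset_iff.2 hS) (mk_image_le.trans_lt hSκ)
    refine hU.superset_mem _ hmem _ inter_subset_right fun x ⟨hxA, hx⟩ => ⟨fun Y hY => ?_, hxA⟩
    exact (hx _ (mem_image_of_mem _ hY)).1

theorem isKappaComplete_of_mem {D : Ultrafilter α}
    [CardinalInterFilter (D : Filter α) (lift.{1} κ)] (hA : A ∈ D) :
    IsKappaComplete κ A {Y | Y ⊆ A ∧ Y ∈ D} := fun _ hF hFκ =>
  ⟨inter_subset_left,
    Filter.inter_mem hA ((cardinal_sInter_mem hFκ).2 fun _ hY => (hF hY).2)⟩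

end ToUltrafilter

variable {κ lam : Cardinal.{0}}

theorem isStronglyCompactIn_iff : IsStronglyCompactIn κ lam ↔
    ∃ V : Ultrafilter (Set Ordinal.{0}), smallSubsets κ lam ∈ V ∧
      CardinalInterFilter (V : Filter (Set Ordinal.{0})) (lift.{1} κ) ∧
      ∀ α < lam.ord, ∀ᶠ s : Set Ordinal.{0} in V, α ∈ s := by
  constructor
  · rintro ⟨U, hU, hc, hfine⟩
    refine ⟨hU.toUltrafilter, hU.base_mem_toUltrafilter, hc.cardinalInterFilter hU, fun α hα => ?_⟩
    refine hU.mem_toUltrafilter.2 ?_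
    rw [inter_comm]
    exact hfine α hα
  · rintro ⟨V, hV, hc, hfine⟩
    exact ⟨_, isUltrafilterOn_of_mem hV, isKappaComplete_of_mem hV,
      fun α hα => ⟨sep_subset _ _, Filter.inter_mem hV (hfine α hα)⟩⟩

theorem IsMeasurableCard.exists_ultrafilter (hκ : IsMeasurableCard κ) :
    ∃ D : Ultrafilter Ordinal.{0}, Iio κ.ord ∈ D ∧
      CardinalInterFilter (D : Filter Ordinal.{0}) (lift.{1} κ) ∧ ∀ γ, {γ} ∉ D := by
  obtain ⟨-, U, hU, hc, hnonprincipal⟩ := hκ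
  refine ⟨hU.toUltrafilter, hU.base_mem_toUltrafilter, hc.cardinalInterFilter hU, fun γ hγ => ?_⟩
  obtain ⟨x, rfl, hx⟩ :=
    Ultrafilter.nonempty_of_mem (Filter.inter_mem hγ hU.base_mem_toUltrafilter)
  refine hnonprincipal x ?_
  rwa [hU.mem_toUltrafilter, inter_eq_left.2 (singleton_subset_iff.2 hx)] at hγ

theorem IsMeasurableCard.two_power_lt (hκ : IsMeasurableCard κ) {ν : Cardinal.{0}} (hν : ν < κ) :
    2 ^ ν < κ := by
  obtain ⟨D, hDκ, _, hD⟩ := hκ.exists_ultrafilter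
  have hlt := two_power_lt_mk_of_mem hD hDκ (lift_lt.{0, 1}.2 hν)
  rwa [mk_Iio_ordinal, card_ord, ← lift_two_power, lift_lt] at hlt

theorem eventually_le_lift_card {l : Filter Ordinal.{0}} [CardinalInterFilter l (lift.{1} κ)]
    (hl : ∀ γ < κ.ord, {γ}ᶜ ∈ l) {a : Cardinal.{1}} (ha : a < lift.{1} κ) :
    ∀ᶠ ξ in l, a ≤ lift.{1} ξ.card := by
  obtain ⟨ν, hν, rfl⟩ := lt_lift_iff.1 ha
  have hcard : #(Iio ν.ord) < lift.{1} κ := by rwa [mk_Iio_ordinal, card_ord]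
  have hbelow : ∀ γ ∈ Iio ν.ord, γ < κ.ord := fun _ hγ => lt_trans hγ (ord_lt_ord.2 hν)
  filter_upwards [compl_mem_of_mk_lt hcard fun γ hγ => hl γ (hbelow γ hγ)] with ξ hξ
  exact lift_le.2 (ord_le.1 (not_lt.1 hξ))

theorem smallSubsets_mono {μ : Cardinal.{0}} (h : μ ≤ κ) :
    smallSubsets μ lam ⊆ smallSubsets κ lam :=
  fun _ hs => ⟨hs.1, hs.2.trans_le (lift_le.2 h)⟩

theorem isStronglyCompactIn_of_eventually {D : Ultrafilter Ordinal.{0}}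
    [CardinalInterFilter (D : Filter Ordinal.{0}) (lift.{1} κ)] (hD : ∀ γ, {γ} ∉ D)
    (h : ∀ᶠ ξ : Ordinal.{0} in D, ∃ μ, ξ.card < μ ∧ μ ≤ κ ∧ IsStronglyCompactIn μ lam) :
    IsStronglyCompactIn κ lam := by
  have hV : ∀ᶠ ξ : Ordinal.{0} in D, ∃ V : Ultrafilter (Set Ordinal.{0}),
      smallSubsets κ lam ∈ V ∧
      CardinalInterFilter (V : Filter (Set Ordinal.{0})) (Order.succ (lift.{1} ξ.card)) ∧
      ∀ α < lam.ord, ∀ᶠ s : Set Ordinal.{0} in V, α ∈ s := by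
    filter_upwards [h] with ξ ⟨μ, hξμ, hμκ, hμ⟩
    obtain ⟨V, hVμ, _, hfine⟩ := isStronglyCompactIn_iff.1 hμ
    exact ⟨V, Filter.mem_of_superset hVμ (smallSubsets_mono hμκ),
      .of_cardinalInterFilter_of_le _ (Order.succ_le_of_lt (lift_lt.2 hξμ)), hfine⟩
  have hcompl : ∀ γ < κ.ord, {γ}ᶜ ∈ D := fun γ _ => Ultrafilter.compl_mem_iff_notMem.2 (hD γ)
  obtain ⟨V, hV⟩ := hV.choice
  refine isStronglyCompactIn_iff.2 ⟨D.bind V, hV.mono fun ξ hξ => hξ.1,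
    cardinalInterFilter_bind fun a ha => ?_, fun α hα => hV.mono fun ξ hξ => hξ.2.2 α hα⟩
  filter_upwards [hV, eventually_le_lift_card hcompl ha] with ξ ⟨_, _, _⟩ haξ
  exact .of_cardinalInterFilter_of_le _ (Order.succ_le_succ haξ)

theorem menas_measurable_limit_stronglyCompact_general (hκ : IsMeasurableCard κ)
    (hub : ∀ β < κ, ∃ μ, β ≤ μ ∧ μ < κ ∧ IsStronglyCompactIn μ lam) :
    IsStronglyCompactIn κ lam := by
  obtain ⟨D, hDκ, _, hD⟩ := hκ.exists_ultrafilter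
  refine isStronglyCompactIn_of_eventually hD ?_
  filter_upwards [hDκ] with ξ hξ
  obtain ⟨μ, hξμ, hμκ, hμ⟩ := hub _ (hκ.two_power_lt (lt_ord.1 hξ))
  exact ⟨μ, (cantor _).trans_le hξμ, hμκ.le, hμ⟩

/-- **Menas.** If `κ` is a measurable cardinal and the set of strongly compact cardinals
below `κ` is unbounded in `κ`, then `κ` is strongly compact. -/
theorem menas_measurable_limit_stronglyCompact (κ : Cardinal.{0})
    (hmeas : IsMeasurableCard κ)
    (hub : ∀ β < κ, ∃ μ : Cardinal.{0}, β ≤ μ ∧ μ < κ ∧ IsStronglyCompactCard μ) :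
    IsStronglyCompactCard κ := by
  exact fun lam hlam => menas_measurable_limit_stronglyCompact_general hmeas fun β hβ =>
    (hub β hβ).imp fun _ ⟨hβμ, hμκ, hμ⟩ => ⟨hβμ, hμκ, hμ lam (hμκ.le.trans hlam)⟩
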